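/- Let ε > 0, L > 0, T > 0, and let v : [0, T] × ℝ → ℝ be smooth, L-periodic in x, strictly positive everywhere, and satisfy ∂ₜv = −∂ₓ( f_ε(v) ∂ₓ³ v ) on [0, T] × ℝ. Then for every t ∈ [0, T], ∫₀^L G_ε(v(t, x)) dx + ∫₀^t ∫₀^L (∂ₓ² v(s,x))² dx ds = ∫₀^L G_ε(v(0, x)) dx, where G_ε(s) = ε/(6s²) − ln s. -/

import Mathlib

/-!
If `G'' = 1 / m` and `∂ₜv = -∂ₓ(m(v) ∂ₓ³v)`, then at each time
`∫ G'(v) ∂ₜv = ∫ ∂ₓ(G'(v)) m(v) ∂ₓ³v = ∫ ∂ₓv ∂ₓ³v = -∫ (∂ₓ²v)²`,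
where the boundary terms of both integrations by parts vanish by periodicity. The left-hand side is
the time derivative of `∫ G(v)`; integrating it over time, with Fubini in place of differentiation
under the integral sign, gives the identity.
-/

open Set Function MeasureTheory intervalIntegral
open scoped Interval

/-- The mobility `f_ε(s) = s⁴ / (ε + s²)` of the regularized thin-film equation. -/
noncomputable def regularizedMobility (ε s : ℝ) : ℝ := s ^ 4 / (ε + s ^ 2)

/-- The entropy `G_ε(s) = ε / (6s²) - ln s` of the regularized thin-film equation. As `Real.log s`
is `ln |s|`, this is the even extension of `G_ε` to `s ≠ 0`. -/
noncomputable def regularizedEntropy (ε s : ℝ) : ℝ := ε / (6 * s ^ 2) - Real.log s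

/-- `G` is an entropy for the mobility `m` on the set `U` of admissible values: `G'' = 1 / m` there.
The mobility is required not to vanish on `U`, so that `1 / m` is a genuine quotient, and to be
differentiable, so that the flux `m(u) ∂ₓ³u` of a smooth profile `u` is differentiable. -/
structure IsEntropyOn (G m : ℝ → ℝ) (U : Set ℝ) : Prop where
  differentiableAt : ∀ s ∈ U, DifferentiableAt ℝ G s
  hasDerivAt_deriv : ∀ s ∈ U, HasDerivAt (deriv G) (m s)⁻¹ s
  mobility_differentiableAt : ∀ s ∈ U, DifferentiableAt ℝ m s
  mobility_ne_zero : ∀ s ∈ U, m s ≠ 0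

/-- The flux `m(u) ∂ₓ³u` of the thin-film equation `∂ₜu = -∂ₓ(m(u) ∂ₓ³u)` with mobility `m`. -/
noncomputable def thinFilmFlux (m u : ℝ → ℝ) (x : ℝ) : ℝ := m (u x) * deriv^[3] u x

section Calculus

variable {𝕜 F : Type*} [NontriviallyNormedField 𝕜] [NormedAddCommGroup F] [NormedSpace 𝕜 F]

theorem periodic_deriv {f : 𝕜 → F} {c : 𝕜} (hf : Periodic f c) :
    Periodic (deriv f) c := fun x ↦ by
  rw [← deriv_comp_add_const, hf.funext]

theorem periodic_iterate_deriv {f : 𝕜 → F} {c : 𝕜} (hf : Periodic f c) (k : ℕ) :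
    Periodic (deriv^[k] f) c :=
  Iterate.rec (Periodic · c) hf (fun _ ↦ periodic_deriv) k

theorem hasDerivAt_iterate_deriv {f : 𝕜 → F} {n k : ℕ} (hf : ContDiff 𝕜 n f) (hk : k < n) (x : 𝕜) :
    HasDerivAt (deriv^[k] f) (deriv^[k + 1] f x) x := by
  have hle : ((1 + k : ℕ) : WithTop ℕ∞) ≤ n := by exact_mod_cast Nat.one_add_le_iff.2 hk
  rw [iterate_succ_apply']
  exact ((ContDiff.iterate_deriv' 1 k (hf.of_le hle)).differentiable one_ne_zero x).hasDerivAt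

theorem continuous_uncurry_deriv_left {X : Type*} [NormedAddCommGroup X] [NormedSpace 𝕜 X]
    {v : 𝕜 → X → F} (hv : ContDiff 𝕜 1 (uncurry v)) :
    Continuous (uncurry fun t x ↦ deriv (fun τ ↦ v τ x) t) := by
  have hswap : ContDiff 𝕜 1 (uncurry fun (p : 𝕜 × X) τ ↦ v τ p.2) :=
    hv.comp (contDiff_snd.prodMk (contDiff_snd.comp contDiff_fst))
  exact (hswap.fderiv_apply contDiff_fst contDiff_const (zero_add 1).le).continuous

theorem integral_mul_deriv_eq_neg_integral_deriv_mul {A : Type*} [NormedRing A] [NormedAlgebra ℝ A]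
    [CompleteSpace A] {a b : ℝ} {f f' g g' : ℝ → A} (hfab : f a = f b) (hgab : g a = g b)
    (hf : ∀ x ∈ [[a, b]], HasDerivAt f (f' x) x) (hg : ∀ x ∈ [[a, b]], HasDerivAt g (g' x) x)
    (hf' : IntervalIntegrable f' volume a b) (hg' : IntervalIntegrable g' volume a b) :
    ∫ x in a..b, f x * g' x = -∫ x in a..b, f' x * g x := by
  rw [integral_mul_deriv_eq_deriv_mul hf hg hf' hg', hfab, hgab, sub_self, zero_sub]

theorem integral_sub_integral_eq_integral_integral_deriv {E : Type*} [NormedAddCommGroup E]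
    [NormedSpace ℝ E] [CompleteSpace E] {F F' : ℝ → ℝ → E} {a b c d : ℝ}
    (hF : ∀ s ∈ [[a, b]], ∀ x ∈ [[c, d]], HasDerivAt (fun τ ↦ F τ x) (F' s x) s)
    (hF' : ContinuousOn (uncurry F') ([[a, b]] ×ˢ [[c, d]]))
    (ha : IntervalIntegrable (F a) volume c d) (hb : IntervalIntegrable (F b) volume c d) :
    (∫ x in c..d, F b x) - ∫ x in c..d, F a x = ∫ s in a..b, ∫ x in c..d, F' s x := by
  have hint : IntegrableOn (uncurry F') (Ι a b ×ˢ Ι c d) :=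
    (hF'.integrableOn_compact (isCompact_uIcc.prod isCompact_uIcc)).mono_set
      (prod_mono uIoc_subset_uIcc uIoc_subset_uIcc)
  have hftc : ∀ x ∈ [[c, d]], ∫ s in a..b, F' s x = F b x - F a x := fun x hx ↦
    integral_eq_sub_of_hasDerivAt (fun s hs ↦ hF s hs x hx)
      (hF'.uncurry_right x hx).intervalIntegrable
  rw [intervalIntegral_intervalIntegral_swap hint, integral_congr hftc, integral_sub hb ha]

end Calculus

section Dissipation

variable {G m : ℝ → ℝ} {U : Set ℝ}

theorem differentiable_thinFilmFlux {u : ℝ → ℝ} (hu : ContDiff ℝ 4 u)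
    (hm : ∀ x, DifferentiableAt ℝ m (u x)) : Differentiable ℝ (thinFilmFlux m u) := fun x ↦
  ((hm x).comp x (hu.differentiable four_ne_zero x)).mul
    (hasDerivAt_iterate_deriv (n := 4) hu (by norm_num) x).differentiableAt

theorem integral_deriv_mul_iterate_deriv_three {u : ℝ → ℝ} {L : ℝ} (hu : ContDiff ℝ 3 u)
    (hper : Periodic u L) :
    ∫ x in (0 : ℝ)..L, deriv u x * deriv^[3] u x = -∫ x in (0 : ℝ)..L, deriv^[2] u x ^ 2 := by
  have hends (k : ℕ) : deriv^[k] u 0 = deriv^[k] u L := (periodic_iterate_deriv hper k).eq.symm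
  have hd (k : ℕ) (hk : k < 3) (x : ℝ) : HasDerivAt (deriv^[k] u) (deriv^[k + 1] u x) x :=
    hasDerivAt_iterate_deriv (n := 3) hu hk x
  have hc3 : Continuous (deriv^[3] u) := (ContDiff.iterate_deriv' 0 3 hu).continuous
  have hc2 : Continuous (deriv^[2] u) := (ContDiff.iterate_deriv' 1 2 hu).continuous
  simp only [sq]
  exact integral_mul_deriv_eq_neg_integral_deriv_mul (hends 1) (hends 2)
    (fun x _ ↦ hd 1 (by norm_num) x) (fun x _ ↦ hd 2 (by norm_num) x)
    (hc2.intervalIntegrable 0 L) (hc3.intervalIntegrable 0 L)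

theorem integral_deriv_entropy_mul_deriv_flux (hG : IsEntropyOn G m U) {u : ℝ → ℝ} {L : ℝ}
    (hu : ContDiff ℝ 4 u) (hper : Periodic u L) (huU : ∀ x, u x ∈ U)
    (hflux : Continuous (deriv (thinFilmFlux m u))) :
    ∫ x in (0 : ℝ)..L, deriv G (u x) * deriv (thinFilmFlux m u) x =
      ∫ x in (0 : ℝ)..L, deriv^[2] u x ^ 2 := by
  have huL : u 0 = u L := hper.eq.symm
  have hfluxL : thinFilmFlux m u 0 = thinFilmFlux m u L := by
    simp only [thinFilmFlux, huL, (periodic_iterate_deriv hper 3).eq]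
  have hm (x : ℝ) : DifferentiableAt ℝ m (u x) := hG.mobility_differentiableAt _ (huU x)
  have hu' (x : ℝ) : HasDerivAt u (deriv u x) x :=
    (hu.differentiable four_ne_zero x).hasDerivAt
  have hG' (x : ℝ) : HasDerivAt (fun y ↦ deriv G (u y)) ((m (u x))⁻¹ * deriv u x) x :=
    (hG.hasDerivAt_deriv _ (huU x)).comp x (hu' x)
  have hcont : Continuous fun x ↦ (m (u x))⁻¹ * deriv u x := by
    refine Continuous.mul (Continuous.inv₀ ?_ fun x ↦ hG.mobility_ne_zero _ (huU x))
      (hu.continuous_deriv (by norm_num))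
    exact continuous_iff_continuousAt.2 fun x ↦ (hm x).continuousAt.comp (hu' x).continuousAt
  have hcancel (x : ℝ) :
      (m (u x))⁻¹ * deriv u x * thinFilmFlux m u x = deriv u x * deriv^[3] u x := by
    have := hG.mobility_ne_zero _ (huU x)
    simp only [thinFilmFlux]
    field_simp
  calc ∫ x in (0 : ℝ)..L, deriv G (u x) * deriv (thinFilmFlux m u) x
      = -∫ x in (0 : ℝ)..L, (m (u x))⁻¹ * deriv u x * thinFilmFlux m u x :=
        integral_mul_deriv_eq_neg_integral_deriv_mul (by rw [huL]) hfluxL (fun x _ ↦ hG' x)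
          (fun x _ ↦ (differentiable_thinFilmFlux hu hm x).hasDerivAt)
          (hcont.intervalIntegrable 0 L) (hflux.intervalIntegrable 0 L)
    _ = -∫ x in (0 : ℝ)..L, deriv u x * deriv^[3] u x := by simp only [hcancel]
    _ = ∫ x in (0 : ℝ)..L, deriv^[2] u x ^ 2 := by
        rw [integral_deriv_mul_iterate_deriv_three (hu.of_le (by norm_num)) hper, neg_neg]

theorem integral_entropy_sub_integral_entropy (hG : IsEntropyOn G m U) {v : ℝ → ℝ → ℝ}
    {a b c d : ℝ} (hv : ContDiff ℝ 1 (uncurry v))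
    (hvU : ∀ s ∈ [[a, b]], ∀ x ∈ [[c, d]], v s x ∈ U) :
    (∫ x in c..d, G (v b x)) - ∫ x in c..d, G (v a x) =
      ∫ s in a..b, ∫ x in c..d, deriv G (v s x) * deriv (fun τ ↦ v τ x) s := by
  have hvt (x : ℝ) : Differentiable ℝ fun τ ↦ v τ x :=
    (hv.comp (contDiff_id.prodMk contDiff_const)).differentiable one_ne_zero
  have hG'v : ContinuousOn (fun p : ℝ × ℝ ↦ deriv G (v p.1 p.2)) ([[a, b]] ×ˢ [[c, d]]) :=
    fun p hp ↦ ((hG.hasDerivAt_deriv _ (hvU p.1 hp.1 p.2 hp.2)).continuousAt.comp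
      (f := uncurry v) hv.continuous.continuousAt).continuousWithinAt
  have hGv (s : ℝ) (hs : s ∈ [[a, b]]) : IntervalIntegrable (fun x ↦ G (v s x)) volume c d :=
    ContinuousOn.intervalIntegrable fun x hx ↦
      ((hG.differentiableAt _ (hvU s hs x hx)).continuousAt.comp
        (hv.continuous.uncurry_left s).continuousAt).continuousWithinAt
  exact integral_sub_integral_eq_integral_integral_deriv
    (fun s hs x hx ↦ (hG.differentiableAt _ (hvU s hs x hx)).hasDerivAt.comp s (hvt x s).hasDerivAt)
    (hG'v.mul (continuous_uncurry_deriv_left hv).continuousOn)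
    (hGv a left_mem_uIcc) (hGv b right_mem_uIcc)

theorem stmt_14_general (hG : IsEntropyOn G m U) {v : ℝ → ℝ → ℝ} {L a b : ℝ}
    (hv : ContDiff ℝ 1 (uncurry v)) (hvx : ∀ s ∈ [[a, b]], ContDiff ℝ 4 (v s))
    (hper : ∀ s ∈ [[a, b]], Periodic (v s) L) (hvU : ∀ s ∈ [[a, b]], ∀ x, v s x ∈ U)
    (heq : ∀ s ∈ [[a, b]], ∀ x, deriv (fun τ ↦ v τ x) s = -deriv (thinFilmFlux m (v s)) x) :
    (∫ x in (0 : ℝ)..L, G (v b x)) + ∫ s in a..b, ∫ x in (0 : ℝ)..L, deriv^[2] (v s) x ^ 2 =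
      ∫ x in (0 : ℝ)..L, G (v a x) := by
  have hdissipation : ∀ s ∈ [[a, b]],
      ∫ x in (0 : ℝ)..L, deriv G (v s x) * deriv (fun τ ↦ v τ x) s =
        -∫ x in (0 : ℝ)..L, deriv^[2] (v s) x ^ 2 := by
    intro s hs
    have hflux : Continuous (deriv (thinFilmFlux m (v s))) :=
      ((continuous_uncurry_deriv_left hv).uncurry_left s).neg.congr fun x ↦ by
        simp [heq s hs]
    simp only [heq s hs, mul_neg, intervalIntegral.integral_neg]
    rw [integral_deriv_entropy_mul_deriv_flux hG (hvx s hs) (hper s hs) (hvU s hs) hflux]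
  have hbalance := integral_entropy_sub_integral_entropy hG (c := 0) (d := L) hv
    fun s hs x _ ↦ hvU s hs x
  rw [integral_congr hdissipation, intervalIntegral.integral_neg] at hbalance
  linarith

end Dissipation

theorem hasDerivAt_regularizedEntropy (ε : ℝ) {s : ℝ} (hs : s ≠ 0) :
    HasDerivAt (regularizedEntropy ε) (-ε / (3 * s ^ 3) - 1 / s) s := by
  have h := ((hasDerivAt_const s ε).div ((hasDerivAt_pow 2 s).const_mul 6) (by positivity)).sub
    (Real.hasDerivAt_log hs)
  refine h.congr_deriv ?_
  push_cast
  field_simp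
  ring

theorem hasDerivAt_deriv_regularizedEntropy (ε : ℝ) {s : ℝ} (hs : s ≠ 0) :
    HasDerivAt (deriv (regularizedEntropy ε)) (regularizedMobility ε s)⁻¹ s := by
  have hderiv : deriv (regularizedEntropy ε) =ᶠ[nhds s] fun r ↦ -ε / (3 * r ^ 3) - 1 / r :=
    (eventually_ne_nhds hs).mono fun r hr ↦ (hasDerivAt_regularizedEntropy ε hr).deriv
  have h := ((hasDerivAt_const s (-ε)).div ((hasDerivAt_pow 3 s).const_mul 3) (by positivity)).sub
    ((hasDerivAt_const s (1 : ℝ)).div (hasDerivAt_id s) hs)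
  refine (h.congr_of_eventuallyEq hderiv).congr_deriv ?_
  rw [regularizedMobility, inv_div]
  push_cast
  simp only [id]
  field_simp
  ring

theorem isEntropyOn_regularizedEntropy {ε : ℝ} (hε : 0 ≤ ε) :
    IsEntropyOn (regularizedEntropy ε) (regularizedMobility ε) {0}ᶜ where
  differentiableAt _ hs := (hasDerivAt_regularizedEntropy ε hs).differentiableAt
  hasDerivAt_deriv _ hs := hasDerivAt_deriv_regularizedEntropy ε hs
  mobility_differentiableAt s hs := by
    have hs0 : s ≠ 0 := hs
    have hden : ε + s ^ 2 ≠ 0 := by positivity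
    unfold regularizedMobility
    fun_prop (disch := assumption)
  mobility_ne_zero s hs := by
    have hs0 : s ≠ 0 := hs
    unfold regularizedMobility
    positivity

/-- Entropy dissipation identity (3.22): if `v` is smooth, `L`-periodic in `x`,
strictly positive, and solves `∂ₜv = −∂ₓ(f_ε(v) ∂ₓ³v)` on `[0,T] × ℝ`, then with
`G_ε(s) = ε/(6s²) − ln s`, for every `t ∈ [0,T]`,
`∫₀ᴸ G_ε(v(t)) + ∫₀ᵗ∫₀ᴸ (∂ₓ²v)² = ∫₀ᴸ G_ε(v(0))`. -/
theorem stmt_14 (ε L T : ℝ) (hε : 0 < ε) (hL : 0 < L) (hT : 0 < T)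
    (v : ℝ → ℝ → ℝ) (hv : ContDiff ℝ (⊤ : ℕ∞) (Function.uncurry v))
    (hper : ∀ t, Function.Periodic (v t) L)
    (hpos : ∀ t x, 0 < v t x)
    (heq : ∀ t ∈ Set.Icc (0 : ℝ) T, ∀ x : ℝ,
      deriv (fun τ => v τ x) t =
        -deriv (fun y => (v t y ^ 4 / (ε + v t y ^ 2)) * deriv^[3] (v t) y) x) :
    ∀ t ∈ Set.Icc (0 : ℝ) T,
      (∫ x in (0:ℝ)..L, (ε / (6 * v t x ^ 2) - Real.log (v t x))) +
        ∫ s in (0:ℝ)..t, ∫ x in (0:ℝ)..L, (deriv^[2] (v s) x) ^ 2 =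
      ∫ x in (0:ℝ)..L, (ε / (6 * v 0 x ^ 2) - Real.log (v 0 x)) := by
  intro t ht
  have hsub : [[0, t]] ⊆ Icc 0 T := by
    rw [uIcc_of_le ht.1]
    exact Icc_subset_Icc_right ht.2
  exact stmt_14_general (isEntropyOn_regularizedEntropy hε.le) (hv.of_le (by norm_num))
    (fun s _ ↦ mod_cast contDiff_infty.1 (hv.comp (contDiff_const.prodMk contDiff_id)) 4)
    (fun s _ ↦ hper s) (fun s _ x ↦ (hpos s x).ne') (fun s hs ↦ heq s (hsub hs))
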